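/- arXiv:2509.13973 — 6 statements merged into one kernel-verified Lean document; each statement's English description precedes it below -/
import Mathlib

section
/- Let f : Q ⟶ R be a morphism in the category Quiv of quivers (a prefunctor). Then f is a monomorphism in Quiv if and only if its object map f.obj is injective and the induced map on total arrow types, sending ⟨a, b, x⟩ to ⟨f.obj a, f.obj b, f.map x⟩, is injective. -/
open CategoryTheory

/-- The map induced by a prefunctor on total arrow types. -/
def totalMap {Q R : Type*} [Quiver Q] [Quiver R] (f : Q ⥤q R) :
    (Σ (a : Q) (b : Q), a ⟶ b) → (Σ (a : R) (b : R), a ⟶ b) :=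
  fun p => ⟨f.obj p.1, f.obj p.2.1, f.map p.2.2⟩

/-! Vertices of `Q` are the prefunctors into `Q` from the quiver with one vertex and no arrow, and
arrows of `Q` are those from the quiver with a single arrow between two vertices. Under these
identifications `f.obj` and `totalMap f` are postcomposition with `f`, so both are injective when
`f` is a monomorphism. Conversely, a prefunctor `g` is determined by `g.obj` and `totalMap g`, and
both assignments respect composition, so `f` can be cancelled as soon as `f.obj` and `totalMap f`
are injective. -/

universe v u

section Postcomposition

variable {Q R T : Type*} [Quiver Q] [Quiver R] [Quiver T]

theorem totalMap_comp (g : T ⥤q Q) (f : Q ⥤q R) :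
    totalMap (g ⋙q f) = totalMap f ∘ totalMap g :=
  rfl

theorem prefunctor_eq_of_totalMap_eq {g h : T ⥤q Q} (hobj : g.obj = h.obj)
    (htotal : totalMap g = totalMap h) : g = h := by
  obtain ⟨_, _⟩ := g
  obtain ⟨_, _⟩ := h
  cases hobj
  congr
  funext a b x
  simpa [totalMap] using congrFun htotal ⟨a, b, x⟩

theorem postcomp_injective {f : Q ⥤q R} (hobj : Function.Injective f.obj)
    (htotal : Function.Injective (totalMap f)) :
    Function.Injective fun g : T ⥤q Q => g ⋙q f := by
  intro g h (hgh : g ⋙q f = h ⋙q f)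
  apply prefunctor_eq_of_totalMap_eq
  · exact hobj.comp_left (congrArg Prefunctor.obj hgh)
  · apply htotal.comp_left
    simp only [← totalMap_comp, hgh]

end Postcomposition

/-- The quiver with one vertex and no arrow, which represents the vertices of a quiver. Its universe
levels are free, so that it is an object of every `Quiv.{v, u}`. -/
inductive WalkingVertex : Type u
  | vertex

instance : Quiver.{v} WalkingVertex.{u} :=
  ⟨fun _ _ => PEmpty⟩

/-- The vertices of the quiver `source ⟶ target`, which represents the arrows of a quiver. Its
universe levels are free, as for `WalkingVertex`. -/
inductive WalkingArrow : Type u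
  | source
  | target

/-- The arrows of the quiver `source ⟶ target`. -/
inductive WalkingArrow.Hom : WalkingArrow.{u} → WalkingArrow.{u} → Type v
  | arrow : Hom source target

instance : Quiver.{v} WalkingArrow.{u} :=
  ⟨WalkingArrow.Hom⟩

section Representability

/-- Representability of vertices: a prefunctor from `WalkingVertex` is the choice of a vertex. -/
def walkingVertexEquiv (Q : Type*) [Quiver Q] : (WalkingVertex.{u} ⥤q Q) ≃ Q where
  toFun g := g.obj .vertex
  invFun a := { obj := fun _ => a, map := PEmpty.elim }
  left_inv _ := prefunctor_eq_of_totalMap_eq rfl (funext fun ⟨_, _, x⟩ => x.elim)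
  right_inv _ := rfl

/-- Representability of arrows: a prefunctor from `WalkingArrow` is the choice of an arrow together
with its endpoints. -/
def walkingArrowEquiv (Q : Type*) [Quiver Q] :
    (WalkingArrow.{u} ⥤q Q) ≃ Σ (a : Q) (b : Q), a ⟶ b where
  toFun g := totalMap g ⟨.source, .target, .arrow⟩
  invFun p :=
    { obj := fun | .source => p.1 | .target => p.2.1
      map := fun | .arrow => p.2.2 }
  left_inv _ := prefunctor_eq_of_totalMap_eq
    (funext fun | .source => rfl | .target => rfl) (funext fun ⟨_, _, .arrow⟩ => rfl)
  right_inv _ := rfl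

variable {Q R : Type*} [Quiver Q] [Quiver R]

theorem obj_injective_iff_postcomp_injective (f : Q ⥤q R) :
    Function.Injective f.obj ↔
      Function.Injective fun g : WalkingVertex ⥤q Q => g ⋙q f :=
  calc
    _ ↔ Function.Injective (f.obj ∘ walkingVertexEquiv Q) :=
      ((walkingVertexEquiv Q).injective_comp f.obj).symm
    _ ↔ Function.Injective (walkingVertexEquiv R ∘ fun g => g ⋙q f) := Iff.rfl
    _ ↔ _ := (walkingVertexEquiv R).comp_injective _

theorem totalMap_injective_iff_postcomp_injective (f : Q ⥤q R) :
    Function.Injective (totalMap f) ↔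
      Function.Injective fun g : WalkingArrow ⥤q Q => g ⋙q f :=
  calc
    _ ↔ Function.Injective (totalMap f ∘ walkingArrowEquiv Q) :=
      ((walkingArrowEquiv Q).injective_comp (totalMap f)).symm
    _ ↔ Function.Injective (walkingArrowEquiv R ∘ fun g => g ⋙q f) := Iff.rfl
    _ ↔ _ := (walkingArrowEquiv R).comp_injective _

end Representability

/-- A morphism in `Quiv` is a monomorphism iff its object map is injective and its
induced map on total arrow types is injective. -/
theorem quiv_mono_iff {Q R : Quiv} (f : Q ⟶ R) :
    Mono f ↔ Function.Injective f.obj ∧ Function.Injective (totalMap f) := by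
  rw [mono_iff_forall_injective]
  constructor
  · intro hf
    exact ⟨(obj_injective_iff_postcomp_injective f).2 (hf (Quiv.of WalkingVertex)),
      (totalMap_injective_iff_postcomp_injective f).2 (hf (Quiv.of WalkingArrow))⟩
  · rintro ⟨hobj, htotal⟩ T
    exact postcomp_injective hobj htotal
end

section
/- Let G be a nonempty connected groupoid, i.e., for any two objects c, d of G there exists a morphism c ⟶ d, and fix an object λ of G. Then there exists a functor from G to the product category SingleObj (λ ⟶ λ) × Codiscrete (objects of G) that is bijective on objects and bijective on each hom-set (an isomorphism of categories), where λ ⟶ λ carries its vertex-group structure. -/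
open CategoryTheory

universe v u

/-!
If every object of a category is isomorphic to `X`, the inclusion of the one-object full
subcategory on `X` is an equivalence, so its inverse is a fully faithful functor to a one-object
category. Pairing this inverse with the identity on objects makes it bijective on objects, and
leaves the hom-sets unchanged because those of a codiscrete category are singletons.
-/

section SingleObj

variable {C M : Type*} [Category* C] [Monoid M] {X : C}

theorem full_singleObjFunctor {f : M →* End X} (hf : Function.Surjective f) :
    (SingleObj.functor f).Full where
  map_surjective := hf

theorem faithful_singleObjFunctor {f : M →* End X} (hf : Function.Injective f) :
    (SingleObj.functor f).Faithful where
  map_injective h := hf h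

theorem essSurj_singleObjFunctor (f : M →* End X) (hX : ∀ c : C, Nonempty (X ≅ c)) :
    (SingleObj.functor f).EssSurj where
  mem_essImage c := ⟨SingleObj.star M, hX c⟩

theorem isEquivalence_singleObjFunctor (e : M ≃* End X) (hX : ∀ c : C, Nonempty (X ≅ c)) :
    (SingleObj.functor e.toMonoidHom).IsEquivalence where
  full := full_singleObjFunctor e.surjective
  faithful := faithful_singleObjFunctor e.injective
  essSurj := essSurj_singleObjFunctor e.toMonoidHom hX

end SingleObj

section Codiscrete

variable {C D A : Type*} [Category* C] [Category* D] (F : C ⥤ D)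

theorem bijective_obj_prod'_codiscreteFunctor [Unique D] {f : C → A} (hf : Function.Bijective f) :
    Function.Bijective (F.prod' (Codiscrete.functor f)).obj := by
  constructor
  · intro c d h
    exact hf.injective (congrArg (fun z => z.2.as) h)
  · rintro ⟨y, ⟨a⟩⟩
    obtain ⟨c, hc⟩ := hf.surjective a
    exact ⟨c, Prod.ext (Subsingleton.elim _ _) (congrArg Codiscrete.mk hc)⟩

theorem bijective_map_prod'_codiscreteFunctor [F.Full] [F.Faithful] (f : C → A) (c d : C) :
    Function.Bijective fun x : c ⟶ d => (F.prod' (Codiscrete.functor f)).map x := by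
  constructor
  · intro x y h
    exact F.map_injective (congrArg Prod.fst h)
  · rintro ⟨y, _⟩
    obtain ⟨x, hx⟩ := F.map_surjective y
    exact ⟨x, Prod.ext hx rfl⟩

end Codiscrete

/-- The vertex group of a groupoid at `l` as the endomorphism monoid of `l`. Multiplication is
`x * y = x ≫ y` in the vertex group but `x * y = y ≫ x` in `End l`, so the isomorphism is
inversion. -/
def vertexGroupMulEquivEnd {G : Type*} [Groupoid G] (l : G) : (l ⟶ l) ≃* End l where
  toFun x := Groupoid.inv x
  invFun x := Groupoid.inv x
  left_inv x := inv_inv (G := l ⟶ l) x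
  right_inv x := inv_inv (G := l ⟶ l) x
  map_mul' x y := mul_inv_rev x y

theorem connected_groupoid_iso_product_general {C M : Type*} [Category* C] [Monoid M] {X : C}
    (e : M ≃* End X) (hX : ∀ c : C, Nonempty (X ≅ c)) :
    ∃ Φ : C ⥤ SingleObj M × Codiscrete C,
      Function.Bijective Φ.obj ∧
      ∀ c d : C, Function.Bijective (fun x : c ⟶ d => Φ.map x) := by
  have := isEquivalence_singleObjFunctor e hX
  let F : C ⥤ SingleObj M := (SingleObj.functor e.toMonoidHom).inv
  exact ⟨F.prod' (Codiscrete.functor id),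
    bijective_obj_prod'_codiscreteFunctor F Function.bijective_id,
    bijective_map_prod'_codiscreteFunctor F id⟩

/-- Every connected groupoid is isomorphic (as a category, via a functor bijective on
objects and on all hom-sets) to the product of the vertex group at a chosen object `l`
(as a one-object groupoid) with the codiscrete (coarse) category on its objects. -/
theorem connected_groupoid_iso_product {G : Type u} [Groupoid.{v} G]
    (hconn : ∀ c d : G, Nonempty (c ⟶ d)) (l : G) :
    ∃ Φ : G ⥤ (SingleObj (l ⟶ l)) × Codiscrete G,
      Function.Bijective Φ.obj ∧
      ∀ c d : G, Function.Bijective (fun x : c ⟶ d => Φ.map x) :=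
  connected_groupoid_iso_product_general (vertexGroupMulEquivEnd l) fun c =>
    (hconn l c).map (Groupoid.isoEquivHom l c).symm
end

section
/- Let G and H be groupoids and F : G ⥤ H a functor, regarded as a morphism in the category Grpd of groupoids. Then F is an epimorphism in Grpd if and only if the only subgroupoid S of H that contains every arrow in the image of F (i.e., F.map x ∈ S.arrows (F.obj a) (F.obj b) for every arrow x : a ⟶ b of G) is the top subgroupoid ⊤. -/
open CategoryTheory

/-!
For an epimorphism `F` and a subgroupoid `S` containing the image of `F`, fix an object `c` and let
`H` act by precomposition on the sets `Set (d ⟶ c)`. Symmetric difference with `S.arrows d c` is an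
involution of each of these sets, and it commutes with the action of `f : d ⟶ e` exactly when
`f ≫ g ∈ S ↔ g ∈ S` for all `g : e ⟶ c`, in particular whenever `f ∈ S`. Conjugating an action by
a family of automorphisms gives a second action, so an epimorphism detects that this family commutes
with all arrows of `H`; taking `g = 𝟙 c` shows that every `f : d ⟶ c` lies in `S`.

Conversely, the arrows on which two functors agree form a subgroupoid.
-/

open scoped symmDiff

universe v u w w'

namespace GrpdEpi

section EqLocus

variable {H : Type u} [Groupoid.{v} H] {K : Type w} [Category.{w'} K]

/-- The equalizer of two functors, as a subgroupoid. Agreement on an arrow includes agreement on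
its endpoints. -/
def eqLocus (A B : H ⥤ K) : Subgroupoid H where
  arrows c d := {f | ∃ (p : A.obj c = B.obj c) (q : A.obj d = B.obj d),
    A.map f = eqToHom p ≫ B.map f ≫ eqToHom q.symm}
  inv := by
    rintro c d f ⟨p, q, hf⟩
    refine ⟨q, p, ?_⟩
    simp [Groupoid.inv_eq_inv, Functor.map_inv, hf]
  mul := by
    rintro c d e f ⟨p, q, hf⟩ g ⟨_, q', hg⟩
    exact ⟨p, q', by simp [hf, hg]⟩

theorem eq_of_eqLocus_eq_top {A B : H ⥤ K} (h : eqLocus A B = ⊤) : A = B := by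
  have hmem {c d : H} (f : c ⟶ d) : f ∈ (eqLocus A B).arrows c d := h ▸ Subgroupoid.mem_top f
  exact CategoryTheory.Functor.ext (fun c ↦ (hmem (𝟙 c)).1) fun c d f ↦ (hmem f).2.2

theorem map_mem_eqLocus {G : Type*} [Category* G] {F : G ⥤ H} {A B : H ⥤ K}
    (h : F ⋙ A = F ⋙ B) {a b : G} (x : a ⟶ b) :
    F.map x ∈ (eqLocus A B).arrows (F.obj a) (F.obj b) :=
  ⟨Functor.congr_obj h a, Functor.congr_obj h b, Functor.congr_hom h x⟩

end EqLocus

section ArrowSets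

variable {C : Type u} [Category.{v} C]

/-- The action of a category on the sets of arrows into a fixed object `c`, which serves to tell the
arrows of a subgroupoid from the others. Taking preimages under precomposition makes the action
covariant. -/
def arrowSetFunctor (c : C) : C ⥤ Type v where
  obj d := Set (d ⟶ c)
  map f := TypeCat.ofHom fun X ↦ (f ≫ ·) ⁻¹' X

/-- Symmetric difference with a fixed set `T` of arrows `d ⟶ c`, as an automorphism of the value
at `d` of the functor `arrowSetFunctor c`. -/
def symmDiffIso {c d : C} (T : Set (d ⟶ c)) :
    (arrowSetFunctor c).obj d ≅ (arrowSetFunctor c).obj d :=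
  (symmDiff_left_involutive T).toPerm.toIso

theorem arrowSetFunctor_map_comp_symmDiffIso_iff {c d e : C} (f : d ⟶ e)
    (T : Set (d ⟶ c)) (U : Set (e ⟶ c)) :
    (arrowSetFunctor c).map f ≫ (symmDiffIso U).hom =
        (symmDiffIso T).hom ≫ (arrowSetFunctor c).map f ↔
      ∀ g : e ⟶ c, f ≫ g ∈ T ↔ g ∈ U :=
  calc
    _ ↔ ∀ X : Set (d ⟶ c), ((f ≫ ·) ⁻¹' X) ∆ U = (f ≫ ·) ⁻¹' (X ∆ T) :=
      ConcreteCategory.ext_iff.trans DFunLike.ext_iff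
    _ ↔ U = (f ≫ ·) ⁻¹' T := by simp only [Set.preimage_symmDiff, symmDiff_right_inj, forall_const]
    _ ↔ ∀ g : e ⟶ c, f ≫ g ∈ T ↔ g ∈ U := eq_comm.trans Set.ext_iff

end ArrowSets

section Epi

variable {G H : Grpd.{v, u}} (F : G ⟶ H) [Epi F]

theorem functor_right_cancel_of_epi {K : Type u} [Groupoid.{v} K] {A B : H ⥤ K}
    (h : F ⋙ A = F ⋙ B) : A = B :=
  (cancel_epi (Z := Grpd.of K) F).mp h

theorem obj_right_cancel_of_epi {X : Type u} {φ ψ : H → X} (h : φ ∘ F.obj = ψ ∘ F.obj) :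
    φ = ψ := by
  -- The codiscrete groupoid on `X`: a functor into it is just a function on objects.
  let K := InducedCategory (Discrete PUnit.{v + 1}) fun _ : X ↦ ⟨PUnit.unit⟩
  let toFunctor (χ : H → X) : H ⥤ K := { obj := χ, map := fun _ ↦ ⟨𝟙 _⟩ }
  have hFφψ : F ⋙ toFunctor φ = F ⋙ toFunctor ψ :=
    CategoryTheory.Functor.ext (congrFun h) fun _ _ _ ↦
      InducedCategory.hom_ext (Subsingleton.elim _ _)
  exact congrArg Functor.obj (functor_right_cancel_of_epi F hFφψ)

theorem obj_surjective_of_epi : Function.Surjective F.obj :=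
  Function.surjective_of_right_cancellable_Prop fun p q h ↦
    ULift.up_injective.comp_left <|
      obj_right_cancel_of_epi F (φ := ULift.up ∘ p) (ψ := ULift.up ∘ q) <|
        congrArg (ULift.up ∘ ·) h

theorem iso_family_natural_of_epi {C : Type w} [Category.{v} C] {A B : H ⥤ C}
    (σ : ∀ c : H, A.obj c ≅ B.obj c)
    (hσ : ∀ {a b : G} (x : a ⟶ b),
      A.map (F.map x) ≫ (σ (F.obj b)).hom = (σ (F.obj a)).hom ≫ B.map (F.map x))
    {c d : H} (f : c ⟶ d) : A.map f ≫ (σ d).hom = (σ c).hom ≫ B.map f := by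
  -- Inducing along `A.obj` brings the objects of the target into the universe of those of `H`.
  let K := InducedCategory (Core C) fun c : H ↦ ⟨A.obj c⟩
  let B' : H ⥤ C := B.copyObj A.obj fun c ↦ (σ c).symm
  have map_eq_iff {c d : H} (f : c ⟶ d) :
      A.map f = B'.map f ↔ A.map f ≫ (σ d).hom = (σ c).hom ≫ B.map f := by
    rw [← Iso.eq_comp_inv, Category.assoc]
    rfl
  let A₁ : H ⥤ K := { obj := id, map := fun f ↦ ⟨(Core.functorToCore A).map f⟩ }
  let B₁ : H ⥤ K := { obj := id, map := fun f ↦ ⟨(Core.functorToCore B').map f⟩ }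
  have hF : F ⋙ A₁ = F ⋙ B₁ :=
    CategoryTheory.Functor.hext (fun _ ↦ rfl) fun a b x ↦ heq_of_eq <|
      InducedCategory.hom_ext <| Core.hom_ext <| (map_eq_iff _).mpr (hσ x)
  have hmap : A₁.map f = B₁.map f := by
    simpa using Functor.congr_hom (functor_right_cancel_of_epi F hF) f
  exact (map_eq_iff f).mp (congrArg (fun g ↦ g.hom.iso.hom) hmap)

variable {S : Subgroupoid H}

theorem comp_mem_arrows_iff_of_epi
    (hS : ∀ (a b : G) (x : a ⟶ b), F.map x ∈ S.arrows (F.obj a) (F.obj b))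
    {c d e : H} (f : d ⟶ e) (g : e ⟶ c) : f ≫ g ∈ S.arrows d c ↔ g ∈ S.arrows e c := by
  refine (arrowSetFunctor_map_comp_symmDiffIso_iff f _ _).mp ?_ g
  refine iso_family_natural_of_epi F (fun d ↦ symmDiffIso (S.arrows d c)) (fun x ↦ ?_) f
  exact (arrowSetFunctor_map_comp_symmDiffIso_iff _ _ _).mpr fun g ↦
    S.mul_mem_cancel_left (hS _ _ x)

theorem eq_top_of_epi
    (hS : ∀ (a b : G) (x : a ⟶ b), F.map x ∈ S.arrows (F.obj a) (F.obj b)) : S = ⊤ := by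
  have hid (c : H) : 𝟙 c ∈ S.arrows c c := by
    obtain ⟨a, rfl⟩ := obj_surjective_of_epi F c
    exact F.map_id a ▸ hS a a (𝟙 a)
  refine top_le_iff.mp ((Subgroupoid.le_iff _ _).mpr fun {d c} f _ ↦ ?_)
  exact Category.comp_id f ▸ (comp_mem_arrows_iff_of_epi F hS f (𝟙 c)).mpr (hid c)

end Epi

end GrpdEpi

/-- A functor between groupoids is an epimorphism in `Grpd` iff the only subgroupoid of the
target containing all arrows in its image is the top subgroupoid. -/
theorem grpd_epi_iff_generates {G H : Grpd} (F : G ⟶ H) :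
    Epi F ↔
      ∀ S : Subgroupoid H,
        (∀ (a b : G) (x : a ⟶ b), F.map x ∈ S.arrows (F.obj a) (F.obj b)) → S = ⊤ := by
  constructor
  · intro _ S hS
    exact GrpdEpi.eq_top_of_epi F hS
  · intro hgen
    refine ⟨fun A B h ↦ GrpdEpi.eq_of_eqLocus_eq_top (hgen _ fun a b x ↦ ?_)⟩
    exact GrpdEpi.map_mem_eqLocus h x
end

section
/- Let G and H be groupoids and F : G ⥤ H a functor, regarded as a morphism in the category Grpd of groupoids. Then F is a monomorphism in Grpd if and only if F is faithful and its object map F.obj is injective. -/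
open CategoryTheory

/-!
A monomorphism `F : G ⟶ H` can be cancelled from two kinds of parallel pairs of functors. The
constant functors `G ⥤ G` at objects `x` and `y` with the same image under `F` become equal after
composition with `F`, so `x = y`. The same holds for the two projections to `G` of the groupoid
whose arrows are the pairs `(f, g)` of parallel arrows with `F f = F g`, so `f = g`. Both test
groupoids live in the universes of `G`, so no lifting is needed.
-/

universe v u v₁ u₁ v₂ u₂ v₃ u₃

section Functor

variable {B : Type u₁} [Category.{v₁} B] {C : Type u₂} [Category.{v₂} C]
  {D : Type u₃} [Category.{v₃} D]

theorem functor_eq_of_comp_eq (F : C ⥤ D) [F.Faithful] (hF : Function.Injective F.obj)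
    {K L : B ⥤ C} (h : K ⋙ F = L ⋙ F) : K = L := by
  have hobj (X : B) : K.obj X = L.obj X := hF (Functor.congr_obj h X)
  refine CategoryTheory.Functor.ext hobj fun X Y f => F.map_injective ?_
  simpa [eqToHom_map] using Functor.congr_hom h f

theorem const_comp_eq_of_obj_eq (F : C ⥤ D) {x y : C} (h : F.obj x = F.obj y) :
    (Functor.const B).obj x ⋙ F = (Functor.const B).obj y ⋙ F :=
  CategoryTheory.Functor.ext (fun _ => h) fun _ _ _ => by simp

/-- The kernel pair of `F` over a fixed collection of objects: the objects are those of `C`, and the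
arrows are the pairs of parallel arrows of `C` identified by `F`. The full kernel pair would have
pairs of objects identified by `F` as its objects; the diagonal ones suffice to test faithfulness,
and for them `F.map f = F.map g` typechecks without transport. -/
structure HomKernelPair (F : C ⥤ D) where
  obj : C

namespace HomKernelPair

variable {F : C ⥤ D}

/-- An arrow of `HomKernelPair F`: two parallel arrows with the same image under `F`. -/
@[ext]
structure Hom (X Y : HomKernelPair F) where
  fst : X.obj ⟶ Y.obj
  snd : X.obj ⟶ Y.obj
  map_fst_eq_map_snd : F.map fst = F.map snd

instance : Category (HomKernelPair F) where
  Hom := Hom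
  id X := ⟨𝟙 X.obj, 𝟙 X.obj, rfl⟩
  comp p q := ⟨p.fst ≫ q.fst, p.snd ≫ q.snd, by
    simp only [F.map_comp, p.map_fst_eq_map_snd, q.map_fst_eq_map_snd]⟩
  id_comp _ := Hom.ext (Category.id_comp _) (Category.id_comp _)
  comp_id _ := Hom.ext (Category.comp_id _) (Category.comp_id _)
  assoc _ _ _ := Hom.ext (Category.assoc _ _ _) (Category.assoc _ _ _)

variable (F) in
/-- The projection of `HomKernelPair F` to `C` that selects the first arrow of each pair. -/
def fstFunctor : HomKernelPair F ⥤ C where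
  obj X := X.obj
  map p := p.fst

variable (F) in
/-- The projection of `HomKernelPair F` to `C` that selects the second arrow of each pair. -/
def sndFunctor : HomKernelPair F ⥤ C where
  obj X := X.obj
  map p := p.snd

variable (F) in
theorem fstFunctor_comp_eq_sndFunctor_comp : fstFunctor F ⋙ F = sndFunctor F ⋙ F :=
  Functor.hext (fun _ => rfl) fun _ _ p => heq_of_eq p.map_fst_eq_map_snd

theorem faithful_of_fstFunctor_eq_sndFunctor (h : fstFunctor F = sndFunctor F) : F.Faithful where
  map_injective {x y f g} hfg :=
    let p : (⟨x⟩ : HomKernelPair F) ⟶ ⟨y⟩ := ⟨f, g, hfg⟩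
    eq_of_heq (Functor.hcongr_hom h p)

end HomKernelPair

end Functor

instance HomKernelPair.groupoid {C : Type u₁} [Groupoid.{v₁} C] {D : Type u₂} [Category.{v₂} D]
    {F : C ⥤ D} : Groupoid (HomKernelPair F) where
  inv p := ⟨Groupoid.inv p.fst, Groupoid.inv p.snd, by
    simp only [Groupoid.inv_eq_inv, F.map_inv, p.map_fst_eq_map_snd]⟩
  inv_comp p := Hom.ext (Groupoid.inv_comp p.fst) (Groupoid.inv_comp p.snd)
  comp_inv p := Hom.ext (Groupoid.comp_inv p.fst) (Groupoid.comp_inv p.snd)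

section Mono

variable {G H : Grpd.{v, u}} (F : G ⟶ H)

theorem functor_eq_of_comp_eq_of_mono [Mono F] {B : Type u} [Groupoid.{v} B] {K L : B ⥤ G}
    (h : K ⋙ F = L ⋙ F) : K = L :=
  (cancel_mono (Z := Grpd.of B) F).1 h

theorem obj_injective_of_mono [Mono F] : Function.Injective F.obj := fun x _ hxy =>
  Functor.congr_obj (functor_eq_of_comp_eq_of_mono F (const_comp_eq_of_obj_eq (B := G) F hxy)) x

theorem faithful_of_mono [Mono F] : F.Faithful :=
  HomKernelPair.faithful_of_fstFunctor_eq_sndFunctor <|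
    functor_eq_of_comp_eq_of_mono F (HomKernelPair.fstFunctor_comp_eq_sndFunctor_comp F)

theorem mono_of_faithful_of_obj_injective [F.Faithful] (hF : Function.Injective F.obj) : Mono F :=
  ⟨fun _ _ h => functor_eq_of_comp_eq F hF h⟩

end Mono

/-- A functor between groupoids is a monomorphism in `Grpd` iff it is faithful and
injective on objects. -/
theorem grpd_mono_iff {G H : Grpd} (F : G ⟶ H) :
    Mono F ↔ F.Faithful ∧ Function.Injective F.obj :=
  ⟨fun _ => ⟨faithful_of_mono F, obj_injective_of_mono F⟩,
    fun ⟨_, hF⟩ => mono_of_faithful_of_obj_injective F hF⟩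
end

section
/- Let f : Λ → Μ be a surjective map and e a setoid on Λ. Then the pushforward of e along f equals the top setoid on Μ if and only if the join e ⊔ Setoid.ker f equals the top setoid on Λ (where Setoid.ker f relates a and b exactly when f a = f b, and the join is taken in the complete lattice of setoids on Λ). -/
/-!
Pushforward is left adjoint to `Setoid.comap f`. As `ker f = comap f ⊥`, joining `ker f` to `e`
leaves the pushforward unchanged; a setoid above `ker f` is recovered from its pushforward by
pulling back. So `comap f (pushforward f e) = e ⊔ ker f`, and for surjective `f` pulling back is
injective and sends only `⊤` to `⊤`.
-/

/-- The pushforward of a setoid `e` on `Λ` along a map `f : Λ → Μ`: the equivalence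
relation on `Μ` generated by relating `f a` and `f b` whenever `e` relates `a` and `b`. -/
def Setoid.pushforward {Λ Μ : Type*} (f : Λ → Μ) (e : Setoid Λ) : Setoid Μ :=
  Relation.EqvGen.setoid (fun x y => ∃ a b : Λ, e.r a b ∧ f a = x ∧ f b = y)

section

variable {α β : Type*}

theorem pushforward_eq_map (f : α → β) (r : Setoid α) : Setoid.pushforward f r = r.map f :=
  rfl

theorem gc_pushforward_comap (f : α → β) :
    GaloisConnection (Setoid.pushforward f) (Setoid.comap f) := by
  intro r s
  constructor
  · intro h
    calc
      r ≤ Setoid.comap f (r.map f) := Setoid.le_comap_map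
      _ ≤ Setoid.comap f s := fun _ _ hab => h hab
  · intro h
    refine Setoid.eqvGen_le ?_
    rintro _ _ ⟨a, b, hab, rfl, rfl⟩
    exact h hab

theorem comap_bot_eq_ker (f : α → β) : Setoid.comap f ⊥ = Setoid.ker f :=
  rfl

theorem pushforward_ker (f : α → β) : Setoid.pushforward f (Setoid.ker f) = ⊥ := by
  rw [← comap_bot_eq_ker, (gc_pushforward_comap f).l_eq_bot]

theorem pushforward_sup_ker (f : α → β) (r : Setoid α) :
    Setoid.pushforward f (r ⊔ Setoid.ker f) = Setoid.pushforward f r := by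
  rw [(gc_pushforward_comap f).l_sup, pushforward_ker, sup_bot_eq]

theorem comap_pushforward (f : α → β) (r : Setoid α) :
    Setoid.comap f (Setoid.pushforward f r) = r ⊔ Setoid.ker f := by
  rw [← pushforward_sup_ker, pushforward_eq_map, Setoid.comap_map_of_ker_le f _ le_sup_right]

theorem comap_eq_top_iff_of_surjective {f : α → β} (hf : Function.Surjective f) {s : Setoid β} :
    Setoid.comap f s = ⊤ ↔ s = ⊤ :=
  (Setoid.comap_injective f hf).eq_iff' (gc_pushforward_comap f).u_top

end

/-- For a surjective map `f`, the pushforward of `e` along `f` is the top setoid iff the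
join of `e` with the kernel of `f` is the top setoid. -/
theorem pushforward_top_iff_sup_ker_top {Λ Μ : Type*} (f : Λ → Μ)
    (hf : Function.Surjective f) (e : Setoid Λ) :
    Setoid.pushforward f e = ⊤ ↔ e ⊔ Setoid.ker f = ⊤ := by
  rw [← comap_pushforward, comap_eq_top_iff_of_surjective hf]
end

section
/- Let G and H be groupoids, π : G ⥤ H and σ : H ⥤ G functors with σ ⋙ π = 𝟭 H and σ.obj (π.obj c) = c for every object c of G. For an arrow x : c ⟶ d of G, let a_x : c ⟶ d denote eqToHom (c = σ.obj (π.obj c)) ≫ σ.map (π.map x) ≫ eqToHom (σ.obj (π.obj d) = d), and let n_x : c ⟶ c be the unique loop with π.map n_x = 𝟙 (π.obj c) and x = n_x ≫ a_x. Then for all composable arrows x : c ⟶ d and y : d ⟶ e of G, one has n_{x ≫ y} = n_x ≫ a_x ≫ n_y ≫ Groupoid.inv a_x; that is, the kernel components multiply by the crossed-product (semidirect-product) rule, the section acting on kernel loops by conjugation. -/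
/-!
By functoriality `a_{x ≫ y} = a_x ≫ a_y`, so `x ≫ y` factors both as `n_{x ≫ y} ≫ a_x ≫ a_y` and
as `n_x ≫ a_x ≫ n_y ≫ a_y`. Cancelling `a_x ≫ a_y` on the right leaves `n_y` conjugated by `a_x`.
-/

open CategoryTheory

section

variable {C : Type*} [Category C]

theorem eq_comp_conj_of_comp_eq {c c' d e : C} {x : c ⟶ d} {a : c' ⟶ d} {y b : d ⟶ e}
    {k l : c ⟶ c'} {m : d ⟶ d} [IsIso a] [Mono b]
    (hx : x = l ≫ a) (hy : y = m ≫ b) (hxy : x ≫ y = k ≫ a ≫ b) :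
    k = l ≫ a ≫ m ≫ inv a := by
  rw [← cancel_mono (a ≫ b)]
  calc
    k ≫ a ≫ b = (l ≫ a) ≫ m ≫ b := by rw [← hxy, ← hx, ← hy]
    _ = (l ≫ a ≫ m ≫ inv a) ≫ a ≫ b := by simp

/-- The component `a_x : c ⟶ d` of an arrow `x : c ⟶ d` in the image of an endofunctor `F` fixing
all objects. As `F` fixes objects only up to propositional equality, `F.map x` is transported to
the endpoints of `x` by `eqToHom`. For a functor `π` with section `σ`, take `F = π ⋙ σ`. -/
def sectionComponent (F : C ⥤ C) (hF : ∀ c, F.obj c = c) {c d : C} (x : c ⟶ d) : c ⟶ d :=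
  eqToHom (hF c).symm ≫ F.map x ≫ eqToHom (hF d)

variable (F : C ⥤ C) (hF : ∀ c, F.obj c = c) {c d e : C}

theorem sectionComponent_comp (x : c ⟶ d) (y : d ⟶ e) :
    sectionComponent F hF (x ≫ y) = sectionComponent F hF x ≫ sectionComponent F hF y := by
  simp [sectionComponent]

instance isIso_sectionComponent (x : c ⟶ d) [IsIso (F.map x)] :
    IsIso (sectionComponent F hF x) := by
  unfold sectionComponent
  infer_instance

instance mono_sectionComponent (x : c ⟶ d) [Mono (F.map x)] :
    Mono (sectionComponent F hF x) := by
  unfold sectionComponent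
  infer_instance

theorem split_epi_kernel_crossed_product_rule_general (n : ∀ c d : C, (c ⟶ d) → (c ⟶ c))
    (hfact : ∀ (c d : C) (x : c ⟶ d), x = n c d x ≫ sectionComponent F hF x)
    (x : c ⟶ d) (y : d ⟶ e) [IsIso (F.map x)] [Mono (F.map y)] :
    n c e (x ≫ y) =
      n c d x ≫ sectionComponent F hF x ≫ n d e y ≫ inv (sectionComponent F hF x) := by
  refine eq_comp_conj_of_comp_eq (hfact c d x) (hfact d e y) ?_
  rw [← sectionComponent_comp]
  exact hfact c e (x ≫ y)

end

/-- For a split epimorphism of groupoids `π : G ⥤ H` with section `σ` fixing the objects of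
`G`, writing each arrow `x : c ⟶ d` uniquely as `x = n_x ≫ a_x` with `π.map n_x` an identity
and `a_x = eqToHom ≫ σ.map (π.map x) ≫ eqToHom`, the kernel components multiply by the
crossed-product rule: `n_{x ≫ y} = n_x ≫ a_x ≫ n_y ≫ inv a_x`. -/
theorem split_epi_kernel_crossed_product_rule {G H : Type*} [Groupoid G] [Groupoid H]
    (π : G ⥤ H) (σ : H ⥤ G) (hsplit : σ ⋙ π = Functor.id H)
    (hfix : ∀ c : G, σ.obj (π.obj c) = c)
    (n : ∀ (c d : G), (c ⟶ d) → (c ⟶ c))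
    (hker : ∀ (c d : G) (x : c ⟶ d), π.map (n c d x) = 𝟙 (π.obj c))
    (hfact : ∀ (c d : G) (x : c ⟶ d),
      x = n c d x ≫ (eqToHom (hfix c).symm ≫ σ.map (π.map x) ≫ eqToHom (hfix d))) :
    ∀ (c d e : G) (x : c ⟶ d) (y : d ⟶ e),
      n c e (x ≫ y) =
        n c d x ≫
          (eqToHom (hfix c).symm ≫ σ.map (π.map x) ≫ eqToHom (hfix d)) ≫
            n d e y ≫
              Groupoid.inv (eqToHom (hfix c).symm ≫ σ.map (π.map x) ≫ eqToHom (hfix d)) := by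
  intro c d e x y
  rw [Groupoid.inv_eq_inv]
  exact split_epi_kernel_crossed_product_rule_general (π ⋙ σ) hfix n hfact x y
end
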